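/- arXiv:1108.3249 — 3 statements merged into one kernel-verified Lean document; each statement's English description precedes it below -/
import Mathlib

section
/- For every positive integer k there exists a constant c ≥ 1, depending only on k, such that for every permutation pattern q of length k and for all positive integers n and m, the number S_{n,m}(q) of permutations of the regular multiset [n]_m that avoid q satisfies S_{n,m}(q) ≤ c^(n·m). -/
/-- A permutation `p` of length `n` contains the permutation `q` of length `k` as a pattern. -/
def PermContains {n k : ℕ} (p : Equiv.Perm (Fin n)) (q : Equiv.Perm (Fin k)) : Prop :=
  ∃ f : Fin k → Fin n, StrictMono f ∧ ∀ a b : Fin k, p (f a) < p (f b) ↔ q a < q b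

/-- A word `w` over `{1,…,n}` contains the permutation pattern `q` of length `k`. -/
def WordContains {l n k : ℕ} (w : Fin l → Fin n) (q : Equiv.Perm (Fin k)) : Prop :=
  ∃ f : Fin k → Fin l, StrictMono f ∧ ∀ a b : Fin k, w (f a) < w (f b) ↔ q a < q b

/-- `w` is a permutation of the regular multiset `[n]_m`: each letter occurs exactly `m` times. -/
def IsRegularWord {l n : ℕ} (m : ℕ) (w : Fin l → Fin n) : Prop :=
  ∀ j : Fin n, (Finset.univ.filter fun i => w i = j).card = m

/-- Ordered-subgraph containment for simple bipartite graphs given by their edge sets. -/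
def GraphContains {n n' k k' : ℕ} (P : Finset (Fin n × Fin n')) (Q : Finset (Fin k × Fin k')) :
    Prop :=
  ∃ (f : Fin k → Fin n) (f' : Fin k' → Fin n'),
    StrictMono f ∧ StrictMono f' ∧ ∀ v v', (v, v') ∈ Q → (f v, f' v') ∈ P

/-- The bipartite graph associated to a permutation `q`: edges `(i, q i)`. -/
def permGraph {k : ℕ} (q : Equiv.Perm (Fin k)) : Finset (Fin k × Fin k) :=
  Finset.univ.image fun i => (i, q i)

/-- The bipartite graph associated to a word `w`: edges `(i, w i)`. -/
def wordGraph {l n : ℕ} (w : Fin l → Fin n) : Finset (Fin l × Fin n) :=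
  Finset.univ.image fun i => (i, w i)

/-- Pattern containment for 0-1 matrices. -/
def MatContains {n n' k k' : ℕ} (P : Fin n → Fin n' → Bool) (Q : Fin k → Fin k' → Bool) : Prop :=
  ∃ (r : Fin k → Fin n) (c : Fin k' → Fin n'),
    StrictMono r ∧ StrictMono c ∧ ∀ i j, Q i j = true → P (r i) (c j) = true

/-- The permutation matrix of a permutation `q`: 1-entry at `(i, q i)`. -/
def permMatrix {k : ℕ} (q : Equiv.Perm (Fin k)) : Fin k → Fin k → Bool :=
  fun i j => decide (q i = j)

/-- The number of 1-entries of a 0-1 matrix. -/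
def oneEntries {n n' : ℕ} (P : Fin n → Fin n' → Bool) : ℕ :=
  (Finset.univ.filter fun ij : Fin n × Fin n' => P ij.1 ij.2 = true).card

/-- The contraction of a bipartite graph on `([n·m],[n])` to one on `([n],[n])`:
`(i,j)` is an edge iff some vertex `t` in the `i`-th block of `m` consecutive vertices
is joined to `j`. -/
def contraction {n m : ℕ} (G : Finset (Fin (n * m) × Fin n)) : Finset (Fin n × Fin n) :=
  Finset.univ.filter fun ij : Fin n × Fin n =>
    ∃ t : Fin (n * m), (t, ij.2) ∈ G ∧ m * (ij.1 : ℕ) ≤ (t : ℕ) ∧ (t : ℕ) < m * ((ij.1 : ℕ) + 1)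

/-- The 0-1 adjacency matrix of a bipartite graph. -/
def adjMatrix {n n' : ℕ} (G : Finset (Fin n × Fin n')) : Fin n → Fin n' → Bool :=
  fun i j => decide ((i, j) ∈ G)

/-- A word contains the multiset pattern `212`. -/
def Contains212 {l n : ℕ} (w : Fin l → Fin n) : Prop :=
  ∃ i₁ i₂ i₃ : Fin l, i₁ < i₂ ∧ i₂ < i₃ ∧ w i₁ = w i₃ ∧ w i₂ < w i₁

/-!
Encode a word by its graph, a set of cells of a square grid. A set of cells avoiding a permutation
pattern of length `k` still avoids it after each `s × s` block is contracted to a single cell.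

* Füredi–Hajnal bound (Marcus–Tardos): blocks with fewer than `k` nonempty rows and fewer than `k`
  nonempty columns hold few cells. By the pigeonhole principle only boundedly many blocks in each
  strip are not of this kind, since `k` blocks occupying the same `k` columns would contain every
  pattern of length `k`. Hence an avoider in the `n × n` grid has `O(n)` cells.
* Counting (Klazar): contracting `2 × 2` blocks sends avoiders in the `n × n` grid to avoiders in
  the `⌈n/2⌉ × ⌈n/2⌉` grid; each image has `O(n)` cells, so it has `2 ^ O(n)` preimages, and halving
  repeatedly bounds the number of avoiders by `2 ^ O(n)`.
-/

section

open Finset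

variable {α β γ δ : Type*} {k l n n' s : ℕ} {q : Equiv.Perm (Fin k)}

/-- Containment of the permutation matrix of `q` in a finite set of cells `(row, column)`: there are
increasing rows `r` and columns `c` whose cells `(r i, c (q i))` all lie in the set. Unlike
`GraphContains`, the rows and columns may come from arbitrary ordered types. -/
def ContainsPattern [Preorder α] [Preorder β] (S : Finset (α × β)) (q : Equiv.Perm (Fin k)) :
    Prop :=
  ∃ (r : Fin k → α) (c : Fin k → β), StrictMono r ∧ StrictMono c ∧ ∀ i, (r i, c (q i)) ∈ S

namespace ContainsPattern

theorem of_image_prodMap [LinearOrder α] [LinearOrder β] [Preorder γ] [Preorder δ]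
    [DecidableEq (γ × δ)] {f : α → γ} {g : β → δ} (hf : Monotone f) (hg : Monotone g)
    {S : Finset (α × β)} (h : ContainsPattern (S.image (Prod.map f g)) q) :
    ContainsPattern S q := by
  obtain ⟨r, c, hr, hc, hS⟩ := h
  choose p hpS hp using fun i => mem_image.1 (hS i)
  have hfp (i) : f (p i).1 = r i := congrArg Prod.fst (hp i)
  have hgp (j) : g (p (q.symm j)).2 = c j := by
    simpa using congrArg Prod.snd (hp (q.symm j))
  refine ⟨fun i => (p i).1, fun j => (p (q.symm j)).2, fun a b hab => ?_, fun a b hab => ?_,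
    fun i => by simpa using hpS i⟩
  · exact hf.reflect_lt (by simpa only [hfp] using hr hab)
  · exact hg.reflect_lt (by simpa only [hgp] using hc hab)

theorem of_image_swap [Preorder α] [Preorder β] [DecidableEq (β × α)] {S : Finset (α × β)}
    (h : ContainsPattern (S.image Prod.swap) q.symm) : ContainsPattern S q := by
  obtain ⟨r, c, hr, hc, hS⟩ := h
  exact ⟨c, r, hc, hr, fun i => by simpa using hS (q i)⟩

theorem of_product_subset [LinearOrder α] [LinearOrder β] {S : Finset (α × β)} {R : Finset α}
    {A : Finset β} (hR : k ≤ #R) (hA : k ≤ #A) (hS : R ×ˢ A ⊆ S) (q : Equiv.Perm (Fin k)) :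
    ContainsPattern S q := by
  obtain ⟨R', hRR', hR'⟩ := exists_subset_card_eq hR
  obtain ⟨A', hAA', hA'⟩ := exists_subset_card_eq hA
  refine ⟨R'.orderEmbOfFin hR', A'.orderEmbOfFin hA', OrderEmbedding.strictMono _,
    OrderEmbedding.strictMono _, fun i => hS (mem_product.2 ⟨?_, ?_⟩)⟩
  · exact hRR' (orderEmbOfFin_mem _ hR' i)
  · exact hAA' (orderEmbOfFin_mem _ hA' (q i))

end ContainsPattern

theorem card_rows_le_of_not_containsPattern [LinearOrder α] [LinearOrder β] {S : Finset (α × β)}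
    (hq : ¬ ContainsPattern S q) {R : Finset α} {B : Finset β} {A : α → Finset β}
    (hAB : ∀ a ∈ R, A a ⊆ B) (hAS : ∀ a ∈ R, ∀ b ∈ A a, (a, b) ∈ S) (hA : ∀ a ∈ R, k ≤ #(A a)) :
    #R ≤ 2 ^ #B * k := by
  by_contra! hlt
  obtain ⟨A₀, -, hfiber⟩ := exists_lt_card_fiber_of_mul_lt_card_of_maps_to (f := A) (n := k)
    (fun a ha => mem_powerset.2 (hAB a ha)) (by rwa [card_powerset])
  obtain ⟨a, ha⟩ := card_pos.1 (Nat.zero_lt_of_lt hfiber)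
  obtain ⟨haR, rfl⟩ := mem_filter.1 ha
  refine hq (.of_product_subset hfiber.le (hA a haR) (fun x hx => ?_) q)
  obtain ⟨hx₁, hx₂⟩ := mem_product.1 hx
  obtain ⟨hxR, hxA⟩ := mem_filter.1 hx₁
  exact hAS x.1 hxR x.2 (hxA ▸ hx₂)

/-! ### Blocks -/

/-- The position of the `s × s` block containing a cell. -/
def blockIndex (s : ℕ) : ℕ × ℕ → ℕ × ℕ :=
  Prod.map (· / s) (· / s)

/-- All the cells of the `s × s` block at position `p`. -/
def blockCells (s : ℕ) (p : ℕ × ℕ) : Finset (ℕ × ℕ) :=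
  Ico (s * p.1) (s * p.1 + s) ×ˢ Ico (s * p.2) (s * p.2 + s)

/-- The part of `S` lying in the `s × s` block at position `p`. -/
def block (S : Finset (ℕ × ℕ)) (s : ℕ) (p : ℕ × ℕ) : Finset (ℕ × ℕ) :=
  {x ∈ S | blockIndex s x = p}

/-- The rows that `S` occupies in the `s × s` block at position `p`. -/
def blockRows (S : Finset (ℕ × ℕ)) (s : ℕ) (p : ℕ × ℕ) : Finset ℕ :=
  (block S s p).image Prod.fst

/-- The columns that `S` occupies in the `s × s` block at position `p`. -/
def blockColumns (S : Finset (ℕ × ℕ)) (s : ℕ) (p : ℕ × ℕ) : Finset ℕ :=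
  (block S s p).image Prod.snd

variable {S : Finset (ℕ × ℕ)} {p : ℕ × ℕ}

theorem monotone_div_const (s : ℕ) : Monotone fun a : ℕ => a / s :=
  fun _ _ hab => Nat.div_le_div_right hab

theorem ContainsPattern.of_image_blockIndex (h : ContainsPattern (S.image (blockIndex s)) q) :
    ContainsPattern S q :=
  of_image_prodMap (monotone_div_const s) (monotone_div_const s) h

theorem image_blockIndex_subset (hs : 0 < s) (hn : n ≤ n' * s) (hS : S ⊆ range n ×ˢ range n) :
    S.image (blockIndex s) ⊆ range n' ×ˢ range n' := by
  refine image_subset_iff.2 fun x hx => ?_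
  obtain ⟨hx₁, hx₂⟩ := mem_product.1 (hS hx)
  rw [mem_range] at hx₁ hx₂
  simp only [blockIndex, mem_product, mem_range, Prod.map_fst, Prod.map_snd,
    Nat.div_lt_iff_lt_mul hs]
  omega

theorem mem_blockCells_blockIndex (hs : 0 < s) (x : ℕ × ℕ) : x ∈ blockCells s (blockIndex s x) := by
  simp only [blockCells, blockIndex, mem_product, mem_Ico, Prod.map_fst, Prod.map_snd]
  exact ⟨⟨Nat.mul_div_le _ _, Nat.lt_mul_div_succ _ hs⟩, Nat.mul_div_le _ _,
    Nat.lt_mul_div_succ _ hs⟩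

theorem card_blockCells (s : ℕ) (p : ℕ × ℕ) : #(blockCells s p) = s ^ 2 := by
  simp [blockCells, sq]

theorem block_subset_blockCells (hs : 0 < s) : block S s p ⊆ blockCells s p := by
  intro x hx
  obtain ⟨-, rfl⟩ := mem_filter.1 hx
  exact mem_blockCells_blockIndex hs x

theorem blockColumns_subset (hs : 0 < s) :
    blockColumns S s p ⊆ Ico (s * p.2) (s * p.2 + s) :=
  image_subset_iff.2 fun _ hx => (mem_product.1 (block_subset_blockCells hs hx)).2

theorem blockRows_eq_blockColumns_swap :
    blockRows S s p = blockColumns (S.image Prod.swap) s p.swap := by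
  ext x
  simp [blockRows, blockColumns, block, blockIndex, Prod.ext_iff, and_comm]

theorem card_block_le_mul : #(block S s p) ≤ #(blockRows S s p) * #(blockColumns S s p) :=
  (card_le_card subset_product).trans_eq (card_product _ _)

theorem card_block_le (hs : 0 < s) (k : ℕ) :
    #(block S s p) ≤ k ^ 2 + (if k ≤ #(blockColumns S s p) then s ^ 2 else 0) +
      (if k ≤ #(blockRows S s p) then s ^ 2 else 0) := by
  have hcells : #(block S s p) ≤ s ^ 2 :=
    (card_le_card (block_subset_blockCells hs)).trans_eq (card_blockCells s p)
  by_cases hsmall : #(blockRows S s p) ≤ k ∧ #(blockColumns S s p) ≤ k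
  · calc #(block S s p) ≤ #(blockRows S s p) * #(blockColumns S s p) := card_block_le_mul
      _ ≤ k * k := Nat.mul_le_mul hsmall.1 hsmall.2
      _ ≤ _ := by rw [← sq, add_assoc]; exact Nat.le_add_right _ _
  · split_ifs <;> omega

theorem card_wide_blocks_in_strip_le (hs : 0 < s) (hq : ¬ ContainsPattern S q) {R : Finset ℕ}
    {b : ℕ} (hR : ∀ a ∈ R, k ≤ #(blockColumns S s (a, b))) : #R ≤ 2 ^ s * k := by
  have havoid : ¬ ContainsPattern (S.image (Prod.map (· / s) id)) q :=
    fun h => hq (.of_image_prodMap (monotone_div_const s) monotone_id h)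
  have hcells : ∀ a ∈ R, ∀ y ∈ blockColumns S s (a, b), (a, y) ∈ S.image (Prod.map (· / s) id) := by
    intro a _ y hy
    obtain ⟨x, hx, rfl⟩ := mem_image.1 hy
    obtain ⟨hxS, hxp⟩ := mem_filter.1 hx
    exact mem_image.2 ⟨x, hxS, Prod.ext (Prod.ext_iff.1 hxp).1 rfl⟩
  simpa using card_rows_le_of_not_containsPattern havoid
    (B := Ico (s * b) (s * b + s)) (fun _ _ => blockColumns_subset hs) hcells hR

theorem card_wide_blocks_le (hs : 0 < s) (hq : ¬ ContainsPattern S q) (m n : ℕ) :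
    #{p ∈ range m ×ˢ range n | k ≤ #(blockColumns S s p)} ≤ n * (2 ^ s * k) := by
  calc #{p ∈ range m ×ˢ range n | k ≤ #(blockColumns S s p)}
      = ∑ b ∈ range n, #{a ∈ range m | k ≤ #(blockColumns S s (a, b))} := by
        simp only [card_filter, sum_product_right]
    _ ≤ ∑ _b ∈ range n, 2 ^ s * k := sum_le_sum fun b _ =>
        card_wide_blocks_in_strip_le hs hq fun a ha => (mem_filter.1 ha).2
    _ = n * (2 ^ s * k) := by simp

theorem card_tall_blocks_le (hs : 0 < s) (hq : ¬ ContainsPattern S q) (m n : ℕ) :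
    #{p ∈ range m ×ˢ range n | k ≤ #(blockRows S s p)} ≤ m * (2 ^ s * k) := by
  have hswap : ¬ ContainsPattern (S.image Prod.swap) q.symm := fun h => hq h.of_image_swap
  refine (card_le_card_of_injOn Prod.swap (fun p hp => ?_) Prod.swap_injective.injOn).trans
    (card_wide_blocks_le hs hswap n m)
  simp only [coe_filter, Set.mem_ofPred_eq, mem_product, blockRows_eq_blockColumns_swap] at hp ⊢
  exact ⟨hp.1.symm, hp.2⟩

theorem card_le_of_image_blockIndex_subset (hs : 0 < s) (hq : ¬ ContainsPattern S q)
    (hS : S.image (blockIndex s) ⊆ range n' ×ˢ range n') :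
    #S ≤ k ^ 2 * #(S.image (blockIndex s)) + 2 * (s ^ 2 * (2 ^ s * k)) * n' := by
  set T := S.image (blockIndex s)
  have hwide : #{p ∈ T | k ≤ #(blockColumns S s p)} ≤ n' * (2 ^ s * k) :=
    (card_le_card (filter_subset_filter _ hS)).trans (card_wide_blocks_le hs hq n' n')
  have htall : #{p ∈ T | k ≤ #(blockRows S s p)} ≤ n' * (2 ^ s * k) :=
    (card_le_card (filter_subset_filter _ hS)).trans (card_tall_blocks_le hs hq n' n')
  calc #S = ∑ p ∈ T, #(block S s p) := card_eq_sum_card_image _ _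
    _ ≤ ∑ p ∈ T, (k ^ 2 + (if k ≤ #(blockColumns S s p) then s ^ 2 else 0) +
          (if k ≤ #(blockRows S s p) then s ^ 2 else 0)) :=
        sum_le_sum fun p _ => card_block_le hs k
    _ = #T * k ^ 2 + #{p ∈ T | k ≤ #(blockColumns S s p)} * s ^ 2 +
          #{p ∈ T | k ≤ #(blockRows S s p)} * s ^ 2 := by
        simp only [sum_add_distrib, ← sum_filter, sum_const, smul_eq_mul]
    _ ≤ #T * k ^ 2 + n' * (2 ^ s * k) * s ^ 2 + n' * (2 ^ s * k) * s ^ 2 := by gcongr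
    _ = k ^ 2 * #T + 2 * (s ^ 2 * (2 ^ s * k)) * n' := by ring

/-! ### The extremal function -/

open Classical in
/-- The sets of cells of the `n × n` grid that avoid the pattern `q`. -/
noncomputable def avoiders (q : Equiv.Perm (Fin k)) (n : ℕ) : Finset (Finset (ℕ × ℕ)) :=
  {S ∈ (range n ×ˢ range n).powerset | ¬ ContainsPattern S q}

/-- The extremal function `ex(n, q)`: the largest number of cells of the `n × n` grid that avoid the
pattern `q`. It is `0` when there are no avoiders, which happens only for the empty pattern. -/
noncomputable def extremalNumber (q : Equiv.Perm (Fin k)) (n : ℕ) : ℕ :=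
  (avoiders q n).sup card

theorem mem_avoiders :
    S ∈ avoiders q n ↔ S ⊆ range n ×ˢ range n ∧ ¬ ContainsPattern S q := by
  simp [avoiders]

theorem card_le_extremalNumber (hS : S ∈ avoiders q n) : #S ≤ extremalNumber q n :=
  le_sup hS

theorem image_blockIndex_mem_avoiders (hs : 0 < s) (hn : n ≤ n' * s) (hS : S ∈ avoiders q n) :
    S.image (blockIndex s) ∈ avoiders q n' := by
  obtain ⟨hSn, hq⟩ := mem_avoiders.1 hS
  exact mem_avoiders.2 ⟨image_blockIndex_subset hs hn hSn, fun h => hq h.of_image_blockIndex⟩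

theorem extremalNumber_le_sq (q : Equiv.Perm (Fin k)) (n : ℕ) : extremalNumber q n ≤ n ^ 2 :=
  Finset.sup_le fun S hS => by
    simpa [sq] using card_le_card (mem_avoiders.1 hS).1

theorem extremalNumber_le_of_le_mul (q : Equiv.Perm (Fin k)) (hs : 0 < s) (hn : n ≤ n' * s) :
    extremalNumber q n ≤ k ^ 2 * extremalNumber q n' + 2 * (s ^ 2 * (2 ^ s * k)) * n' := by
  refine Finset.sup_le fun S hS => ?_
  have hT := image_blockIndex_mem_avoiders hs hn hS
  calc #S ≤ k ^ 2 * #(S.image (blockIndex s)) + 2 * (s ^ 2 * (2 ^ s * k)) * n' :=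
        card_le_of_image_blockIndex_subset hs (mem_avoiders.1 hS).2 (mem_avoiders.1 hT).1
    _ ≤ k ^ 2 * extremalNumber q n' + 2 * (s ^ 2 * (2 ^ s * k)) * n' := by
        gcongr
        exact card_le_extremalNumber hT

/- The factor `K + 2` beats `K`: since `(K + 1) * (n / (K + 2) + 1) ≤ n` for large `n`, one
application of the recurrence leaves room to absorb the linear error term. -/
theorem le_mul_of_block_recurrence {f : ℕ → ℕ} {K D : ℕ} (hsq : ∀ n, f n ≤ n ^ 2)
    (hrec : ∀ n, f n ≤ K * f (n / (K + 2) + 1) + D * (n / (K + 2) + 1)) (n : ℕ) :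
    f n ≤ (D + (K + 2) ^ 2) * n := by
  induction n using Nat.strong_induction_on with
  | _ n ih =>
    obtain hn | hn := lt_or_ge n ((K + 2) ^ 2)
    · calc f n ≤ n * n := (hsq n).trans_eq (sq n)
        _ ≤ (D + (K + 2) ^ 2) * n := by gcongr; omega
    have hquot : K + 2 ≤ n / (K + 2) := by rwa [Nat.le_div_iff_mul_le (by omega), ← sq]
    have hmul : (K + 2) * (n / (K + 2)) ≤ n := Nat.mul_div_le _ _
    set N := n / (K + 2)
    have hlt : N + 1 < n := by nlinarith
    calc f n ≤ K * f (N + 1) + D * (N + 1) := hrec n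
      _ ≤ K * ((D + (K + 2) ^ 2) * (N + 1)) + (D + (K + 2) ^ 2) * (N + 1) := by
          gcongr
          · exact ih _ hlt
          · omega
      _ = (D + (K + 2) ^ 2) * ((K + 1) * (N + 1)) := by ring
      _ ≤ (D + (K + 2) ^ 2) * n := by gcongr; nlinarith

theorem exists_extremalNumber_le_mul (k : ℕ) :
    ∃ C, ∀ (q : Equiv.Perm (Fin k)) (n : ℕ), extremalNumber q n ≤ C * n :=
  ⟨_, fun q => le_mul_of_block_recurrence (K := k ^ 2) (extremalNumber_le_sq q) fun n =>
    extremalNumber_le_of_le_mul q (Nat.succ_pos _) <| by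
      rw [mul_comm]
      exact (Nat.lt_mul_div_succ n (Nat.succ_pos _)).le⟩

/-! ### Counting avoiders -/

theorem card_filter_image_blockIndex_le (hs : 0 < s) (F : Finset (Finset (ℕ × ℕ)))
    (T : Finset (ℕ × ℕ)) : #{S ∈ F | S.image (blockIndex s) = T} ≤ 2 ^ (s ^ 2 * #T) := by
  calc #{S ∈ F | S.image (blockIndex s) = T} ≤ #(T.biUnion (blockCells s)).powerset := by
        refine card_le_card fun S hS => mem_powerset.2 fun x hx => ?_
        obtain ⟨-, rfl⟩ := mem_filter.1 hS
        exact mem_biUnion.2 ⟨_, mem_image_of_mem _ hx, mem_blockCells_blockIndex hs x⟩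
    _ = 2 ^ #(T.biUnion (blockCells s)) := card_powerset _
    _ ≤ 2 ^ (s ^ 2 * #T) := by
        gcongr
        · norm_num
        · rw [mul_comm]
          exact card_biUnion_le_card_mul _ _ _ fun p _ => (card_blockCells s p).le

theorem card_avoiders_le_of_le_mul (q : Equiv.Perm (Fin k)) (hs : 0 < s) (hn : n ≤ n' * s) :
    #(avoiders q n) ≤ 2 ^ (s ^ 2 * extremalNumber q n') * #(avoiders q n') := by
  refine card_le_mul_card_image_of_maps_to
    (fun S hS => image_blockIndex_mem_avoiders hs hn hS) _ fun T hT => ?_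
  refine (card_filter_image_blockIndex_le hs _ T).trans ?_
  gcongr
  · norm_num
  · exact card_le_extremalNumber hT

theorem card_avoiders_le_two_pow_sq (q : Equiv.Perm (Fin k)) (n : ℕ) :
    #(avoiders q n) ≤ 2 ^ n ^ 2 := by
  classical
  simpa [avoiders, sq] using
    card_filter_le (range n ×ˢ range n).powerset (¬ ContainsPattern · q)

theorem card_avoiders_le_of_extremalNumber_le {C : ℕ} (hC : ∀ n, extremalNumber q n ≤ C * n)
    (n : ℕ) : #(avoiders q n) ≤ 2 ^ ((8 * C + 2) * n) := by
  induction n using Nat.strong_induction_on with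
  | _ n ih =>
    obtain hn | hn := le_or_gt n 1
    · refine (card_avoiders_le_two_pow_sq q n).trans (Nat.pow_le_pow_right two_pos ?_)
      nlinarith
    obtain ⟨N, hN⟩ : ∃ N, N = (n + 1) / 2 := ⟨_, rfl⟩
    calc #(avoiders q n) ≤ 2 ^ (2 ^ 2 * extremalNumber q N) * #(avoiders q N) :=
          card_avoiders_le_of_le_mul q two_pos (by omega)
      _ ≤ 2 ^ (2 ^ 2 * (C * N)) * 2 ^ ((8 * C + 2) * N) := by
          gcongr
          · norm_num
          · exact hC N
          · exact ih N (by omega)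
      _ = 2 ^ (4 * C * N + (8 * C + 2) * N) := by rw [← pow_add]; ring_nf
      _ ≤ 2 ^ ((8 * C + 2) * n) := by
          have hN' : 3 * N ≤ 2 * n := by omega
          gcongr
          · norm_num
          · nlinarith

theorem exists_card_avoiders_le_pow (k : ℕ) :
    ∃ c, 1 ≤ c ∧ ∀ (q : Equiv.Perm (Fin k)) (n : ℕ), #(avoiders q n) ≤ c ^ n := by
  obtain ⟨C, hC⟩ := exists_extremalNumber_le_mul k
  refine ⟨2 ^ (8 * C + 2), Nat.one_le_two_pow, fun q n => ?_⟩
  rw [← pow_mul]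
  exact card_avoiders_le_of_extremalNumber_le (hC q) n

/-! ### Words -/

theorem wordGraph_injective :
    Function.Injective (wordGraph : (Fin l → Fin n) → Finset (Fin l × Fin n)) := by
  intro v w hvw
  funext i
  have hi : (i, v i) ∈ wordGraph w := hvw ▸ mem_image_of_mem _ (mem_univ i)
  simpa [wordGraph, eq_comm] using hi

theorem wordContains_of_containsPattern_wordGraph {w : Fin l → Fin n}
    (h : ContainsPattern (wordGraph w) q) : WordContains w q := by
  obtain ⟨r, c, hr, hc, hw⟩ := h
  have hwr (i) : w (r i) = c (q i) := by simpa [wordGraph] using hw i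
  exact ⟨r, hr, fun a b => by rw [hwr, hwr, hc.lt_iff_lt]⟩

/-- The graph of a word as a set of cells of the infinite grid `ℕ × ℕ`, where words of all lengths
and alphabets live together. -/
def wordCells (w : Fin l → Fin n) : Finset (ℕ × ℕ) :=
  (wordGraph w).image (Prod.map Fin.val Fin.val)

theorem wordCells_injective :
    Function.Injective (wordCells : (Fin l → Fin n) → Finset (ℕ × ℕ)) :=
  (image_injective (Fin.val_injective.prodMap Fin.val_injective)).comp wordGraph_injective

theorem wordCells_mem_avoiders {w : Fin l → Fin n} (hw : ¬ WordContains w q) :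
    wordCells w ∈ avoiders q (max l n) := by
  refine mem_avoiders.2 ⟨image_subset_iff.2 fun x _ => ?_, fun h => hw ?_⟩
  · simp only [mem_product, mem_range, Prod.map_fst, Prod.map_snd]
    omega
  · exact wordContains_of_containsPattern_wordGraph
      (h.of_image_prodMap Fin.val_strictMono.monotone Fin.val_strictMono.monotone)

theorem card_not_wordContains_le_card_avoiders (q : Equiv.Perm (Fin k)) (l n : ℕ) :
    Nat.card {w : Fin l → Fin n // ¬ WordContains w q} ≤ #(avoiders q (max l n)) := by
  rw [← Nat.card_eq_finsetCard]
  exact Nat.card_le_card_of_injective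
    (Subtype.map wordCells fun _ => wordCells_mem_avoiders)
    (Subtype.map_injective _ wordCells_injective)

end

theorem multiset_stanley_wilf_general (k : ℕ) :
    ∃ c : ℕ, 1 ≤ c ∧ ∀ (q : Equiv.Perm (Fin k)) (l n : ℕ),
      Nat.card {w : Fin l → Fin n // ¬ WordContains w q} ≤ c ^ max l n := by
  obtain ⟨c, hc, havoiders⟩ := exists_card_avoiders_le_pow k
  exact ⟨c, hc, fun q l n => (card_not_wordContains_le_card_avoiders q l n).trans (havoiders q _)⟩

/-- Stanley–Wilf for permutations of regular multisets. -/
theorem multiset_stanley_wilf (k : ℕ) (hk : 0 < k) :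
    ∃ c : ℕ, 1 ≤ c ∧ ∀ (q : Equiv.Perm (Fin k)) (n m : ℕ), 0 < n → 0 < m →
      Nat.card {w : Fin (n * m) → Fin n // IsRegularWord m w ∧ ¬ WordContains w q} ≤
        c ^ (n * m) := by
  obtain ⟨c, hc, hwords⟩ := multiset_stanley_wilf_general k
  refine ⟨c, hc, fun q n m _ hm => ?_⟩
  calc Nat.card {w : Fin (n * m) → Fin n // IsRegularWord m w ∧ ¬ WordContains w q}
      ≤ Nat.card {w : Fin (n * m) → Fin n // ¬ WordContains w q} :=
        Nat.card_le_card_of_injective _ (Subtype.impEmbedding _ _ fun _ h => h.2).injective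
    _ ≤ c ^ max (n * m) n := hwords q _ _
    _ = c ^ (n * m) := by rw [max_eq_left (Nat.le_mul_of_pos_right n hm)]
end

section
/- Let q be a permutation of length k and let w be a permutation of the regular multiset [n]_m (a word of length n·m over {1,…,n} with each letter occurring exactly m times). If w avoids the pattern q, then the bipartite graph G_w on ([n·m],[n]) associated to w avoids the bipartite graph G_q associated to q as an ordered subgraph. -/
theorem mem_wordGraph {l n : ℕ} {w : Fin l → Fin n} {i : Fin l} {j : Fin n} :
    (i, j) ∈ wordGraph w ↔ w i = j := by
  simp [wordGraph]

theorem permGraph_eq_wordGraph {k : ℕ} (q : Equiv.Perm (Fin k)) : permGraph q = wordGraph q :=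
  rfl

theorem graphContains_wordGraph_wordGraph_iff {l n k k' : ℕ} {w : Fin l → Fin n}
    {u : Fin k → Fin k'} :
    GraphContains (wordGraph w) (wordGraph u) ↔
      ∃ (f : Fin k → Fin l) (f' : Fin k' → Fin n),
        StrictMono f ∧ StrictMono f' ∧ ∀ a, w (f a) = f' (u a) := by
  simp only [GraphContains, mem_wordGraph, forall_eq']

theorem word_avoid_imp_graph_avoid_general {l n k : ℕ} (q : Equiv.Perm (Fin k))
    (w : Fin l → Fin n) (h : ¬ WordContains w q) :
    ¬ GraphContains (wordGraph w) (permGraph q) := by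
  rw [permGraph_eq_wordGraph, graphContains_wordGraph_wordGraph_iff]
  rintro ⟨f, f', hf, hf', w_comp_f⟩
  refine h ⟨f, hf, fun a b => ?_⟩
  rw [w_comp_f, w_comp_f]
  exact hf'.lt_iff_lt

/-- If a multiset permutation `w` avoids `q`, then `G_w` avoids `G_q`. -/
theorem word_avoid_imp_graph_avoid {k n m : ℕ} (q : Equiv.Perm (Fin k))
    (w : Fin (n * m) → Fin n) (hw : IsRegularWord m w) (h : ¬ WordContains w q) :
    ¬ GraphContains (wordGraph w) (permGraph q) :=
  word_avoid_imp_graph_avoid_general q w h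
end

section
/- Let q be a permutation of length k, let m, n be positive integers, and let G be a simple bipartite graph on ([n·m],[n]) that avoids the bipartite graph G_q as an ordered subgraph. Then the contraction G' of G, the bipartite graph on ([n],[n]) in which (i,j) is an edge iff there exists t with m(i−1)+1 ≤ t ≤ m·i and (t,j) an edge of G, also avoids G_q as an ordered subgraph. -/
/-! Contraction is the image of a graph under a monotone collapse of its left vertices. A pattern in
the image pulls back by choosing one preimage of each left vertex: since that vertex has at most one
neighbour in the pattern, the left end of a preimage of its only edge will do, and preimages under
a monotone map of strictly increasing vertices are strictly increasing. -/

section BlockCollapse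

variable {n m : ℕ}

theorem divNat_monotone : Monotone (Fin.divNat : Fin (n * m) → Fin n) :=
  fun _ _ hst => Nat.div_le_div_right hst

theorem divNat_surjective (hm : 0 < m) : (Fin.divNat : Fin (n * m) → Fin n).Surjective :=
  have : Nonempty (Fin m) := ⟨⟨0, hm⟩⟩
  Prod.fst_surjective.comp finProdFinEquiv.symm.surjective

theorem divNat_eq_iff {t : Fin (n * m)} {i : Fin n} :
    t.divNat = i ↔ m * (i : ℕ) ≤ t ∧ (t : ℕ) < m * (i + 1) := by
  have hm : 0 < m := Nat.pos_of_mul_pos_left t.pos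
  rw [Fin.ext_iff, Fin.coe_divNat, Nat.div_eq_iff hm, mul_add_one, mul_comm (i : ℕ)]
  omega

theorem contraction_eq_image (G : Finset (Fin (n * m) × Fin n)) :
    contraction G = G.image (Prod.map Fin.divNat id) := by
  ext ⟨i, j⟩
  simp only [contraction, Finset.mem_filter_univ, ← divNat_eq_iff, Finset.mem_image, Prod.exists,
    Prod.map_apply, id_eq, Prod.mk.injEq, exists_eq_right_right]

end BlockCollapse

theorem injOn_fst_permGraph {k : ℕ} (q : Equiv.Perm (Fin k)) :
    Set.InjOn Prod.fst (permGraph q : Set (Fin k × Fin k)) := by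
  intro e he e' he' hfst
  obtain ⟨i, -, rfl⟩ := Finset.mem_image.1 he
  obtain ⟨i', -, rfl⟩ := Finset.mem_image.1 he'
  obtain rfl : i = i' := hfst
  rfl

theorem contraction_avoids_general {N n n' k k' : ℕ} {c : Fin N → Fin n} (hc : Monotone c)
    (hc_surj : c.Surjective) {Q : Finset (Fin k × Fin k')}
    (hQ : Set.InjOn Prod.fst (Q : Set (Fin k × Fin k'))) {G : Finset (Fin N × Fin n')}
    (h : ¬ GraphContains G Q) : ¬ GraphContains (G.image (Prod.map c id)) Q := by
  rintro ⟨f, f', hf, hf', hfQ⟩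
  have exists_lift (v : Fin k) : ∃ t, c t = f v ∧ ∀ v', (v, v') ∈ Q → (t, f' v') ∈ G := by
    by_cases hv : ∃ v', (v, v') ∈ Q
    · obtain ⟨v', hv'⟩ := hv
      obtain ⟨⟨t, j⟩, htj, heq⟩ := Finset.mem_image.1 (hfQ v v' hv')
      obtain ⟨hct, rfl⟩ : c t = f v ∧ j = f' v' := Prod.mk.inj heq
      refine ⟨t, hct, fun w hw => ?_⟩
      obtain rfl : w = v' := congrArg Prod.snd (hQ hw hv' rfl)
      exact htj
    · obtain ⟨t, hct⟩ := hc_surj (f v)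
      exact ⟨t, hct, fun v' hv' => (hv ⟨v', hv'⟩).elim⟩
  choose g hcg hgQ using exists_lift
  have hg : StrictMono g := fun a b hab => hc.reflect_lt (by simpa only [hcg] using hf hab)
  exact h ⟨g, f', hg, hf', hgQ⟩

/-- The contraction inherits the `G_q`-avoiding property. -/
theorem contraction_avoids {k : ℕ} (q : Equiv.Perm (Fin k)) (n m : ℕ)
    (hn : 0 < n) (hm : 0 < m) (G : Finset (Fin (n * m) × Fin n))
    (h : ¬ GraphContains G (permGraph q)) :
    ¬ GraphContains (contraction G) (permGraph q) := by
  rw [contraction_eq_image]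
  exact contraction_avoids_general divNat_monotone (divNat_surjective hm) (injOn_fst_permGraph q) h
end
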